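/- There exists a unique bilinear form ⟨·,·⟩ : U_f × A → ℂ satisfying the Hopf-pairing axioms ⟨uv, x⟩ = Σ ⟨u, x_{(1)}⟩⟨v, x_{(2)}⟩ (where Δ(x) = Σ x_{(1)}⊗x_{(2)}), ⟨u, xy⟩ = Σ ⟨u_{(1)}, x⟩⟨u_{(2)}, y⟩ (where Δ_U(u) = Σ u_{(1)}⊗u_{(2)}), ⟨1, x⟩ = ε(x), ⟨u, 1⟩ = ε_U(u), together with the generator values ⟨κ, δ⟩ = q, ⟨κ^{−1}, δ⟩ = q^{−1}, ⟨κ^{±1}, η₊⟩ = ⟨κ^{±1}, η₋⟩ = 0, ⟨p±, η±⟩ = i q^{±1/2}, ⟨p±, η∓⟩ = 0, ⟨p±, δ⟩ = 0. This pairing satisfies ⟨p±^n, η±^m⟩ = i^n q^{±n/2} [n]! δ_{nm} and ⟨κ^n, δ^m⟩ = q^{nm} for 0 ≤ n,m ≤ p−1, and it is nondegenerate: U_f and A are in nondegenerate duality. -/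

import Mathlib

open scoped TensorProduct

noncomputable section

/-- `q = exp(2πi/p)`, a primitive `p`-th root of unity. -/
def q (p : ℕ) : ℂ := Complex.exp (2 * Real.pi * Complex.I / p)

/-- `q^{1/2} = exp(iπ/p)`. -/
def qh (p : ℕ) : ℂ := Complex.exp (Real.pi * Complex.I / p)

/-- The balanced q-number `[k] = (q^k - q^{-k})/(q - q^{-1})`. -/
def qnum (p k : ℕ) : ℂ := (q p ^ k - (q p)⁻¹ ^ k) / (q p - (q p)⁻¹)

/-- The balanced q-factorial `[k]! = [1][2]⋯[k]`, with `[0]! = 1`. -/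
def qfact (p k : ℕ) : ℂ := ∏ j ∈ Finset.range k, qnum p (j + 1)

/-- Generators `η₊, η₋, δ` of the coordinate algebra of `E(1,1|p)`. -/
inductive Gen : Type
  | ep : Gen
  | em : Gen
  | d : Gen

open FreeAlgebra in
/-- The defining relations of `A(E(1,1|p))`: the two-sided ideal generated by
`η₋η₊ − q²η₊η₋`, `η₊δ − q²δη₊`, `η₋δ − q²δη₋`, `δ^p − 1`, `η₊^p`, `η₋^p`. -/
inductive ERel (p : ℕ) : FreeAlgebra ℂ Gen → FreeAlgebra ℂ Gen → Prop
  | commEta : ERel p (ι ℂ Gen.em * ι ℂ Gen.ep) ((q p ^ 2) • (ι ℂ Gen.ep * ι ℂ Gen.em))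
  | commEpD : ERel p (ι ℂ Gen.ep * ι ℂ Gen.d) ((q p ^ 2) • (ι ℂ Gen.d * ι ℂ Gen.ep))
  | commEmD : ERel p (ι ℂ Gen.em * ι ℂ Gen.d) ((q p ^ 2) • (ι ℂ Gen.d * ι ℂ Gen.em))
  | deltaPow : ERel p (ι ℂ Gen.d ^ p) 1
  | epPow : ERel p (ι ℂ Gen.ep ^ p) 0
  | emPow : ERel p (ι ℂ Gen.em ^ p) 0

/-- The coordinate algebra `A = A(E(1,1|p))` of the reduced quantum Poincaré group. -/
abbrev A (p : ℕ) : Type := RingQuot (ERel p)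

/-- `η₊ ∈ A`. -/
def ηp (p : ℕ) : A p := RingQuot.mkAlgHom ℂ (ERel p) (FreeAlgebra.ι ℂ Gen.ep)

/-- `η₋ ∈ A`. -/
def ηm (p : ℕ) : A p := RingQuot.mkAlgHom ℂ (ERel p) (FreeAlgebra.ι ℂ Gen.em)

/-- `δ ∈ A`. -/
def dl (p : ℕ) : A p := RingQuot.mkAlgHom ℂ (ERel p) (FreeAlgebra.ι ℂ Gen.d)

/-- Generators `p₊, p₋, κ, κ⁻¹` of `U_f = U(e(1,1|p))`. -/
inductive UGen : Type
  | pp : UGen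
  | pm : UGen
  | k : UGen
  | kinv : UGen

open FreeAlgebra in
/-- The defining relations of `U_f`: the two-sided ideal generated by `p₊p₋ − p₋p₊`,
`p₊κ − q⁻¹κp₊`, `p₋κ − qκp₋`, `κκ⁻¹ − 1`, `κ⁻¹κ − 1`, `κ^p − 1`, `p₊^p`, `p₋^p`. -/
inductive UfRel (p : ℕ) : FreeAlgebra ℂ UGen → FreeAlgebra ℂ UGen → Prop
  | commP : UfRel p (ι ℂ UGen.pp * ι ℂ UGen.pm) (ι ℂ UGen.pm * ι ℂ UGen.pp)
  | ppK : UfRel p (ι ℂ UGen.pp * ι ℂ UGen.k) ((q p)⁻¹ • (ι ℂ UGen.k * ι ℂ UGen.pp))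
  | pmK : UfRel p (ι ℂ UGen.pm * ι ℂ UGen.k) (q p • (ι ℂ UGen.k * ι ℂ UGen.pm))
  | kKinv : UfRel p (ι ℂ UGen.k * ι ℂ UGen.kinv) 1
  | kinvK : UfRel p (ι ℂ UGen.kinv * ι ℂ UGen.k) 1
  | kPow : UfRel p (ι ℂ UGen.k ^ p) 1
  | ppPow : UfRel p (ι ℂ UGen.pp ^ p) 0
  | pmPow : UfRel p (ι ℂ UGen.pm ^ p) 0

/-- The finite quantum algebra `U_f = U(e(1,1|p))`. -/
abbrev Uf (p : ℕ) : Type := RingQuot (UfRel p)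

/-- `p₊ ∈ U_f`. -/
def up (p : ℕ) : Uf p := RingQuot.mkAlgHom ℂ (UfRel p) (FreeAlgebra.ι ℂ UGen.pp)

/-- `p₋ ∈ U_f`. -/
def um (p : ℕ) : Uf p := RingQuot.mkAlgHom ℂ (UfRel p) (FreeAlgebra.ι ℂ UGen.pm)

/-- `κ ∈ U_f`. -/
def uk (p : ℕ) : Uf p := RingQuot.mkAlgHom ℂ (UfRel p) (FreeAlgebra.ι ℂ UGen.k)

/-- `κ⁻¹ ∈ U_f`. -/
def ukinv (p : ℕ) : Uf p := RingQuot.mkAlgHom ℂ (UfRel p) (FreeAlgebra.ι ℂ UGen.kinv)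

/-! ### The root of unity `q` -/

lemma q_ne_zero (p : ℕ) : q p ≠ 0 := Complex.exp_ne_zero _

lemma q_isPrimitiveRoot {p : ℕ} (hp : p ≠ 0) : IsPrimitiveRoot (q p) p :=
  Complex.isPrimitiveRoot_exp p hp

lemma q_pow_self {p : ℕ} (hp : p ≠ 0) : q p ^ p = 1 := (q_isPrimitiveRoot hp).pow_eq_one

lemma q_pow_pred {p : ℕ} (hp : p ≠ 0) : q p ^ (p - 1) = (q p)⁻¹ :=
  eq_inv_of_mul_eq_one_left (by rw [pow_sub_one_mul hp, q_pow_self hp])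

lemma q_inv_pow_self {p : ℕ} (hp : p ≠ 0) : (q p)⁻¹ ^ p = 1 := by
  rw [inv_pow, q_pow_self hp, inv_one]

lemma q_inv_pow_pred {p : ℕ} (hp : p ≠ 0) : (q p)⁻¹ ^ (p - 1) = q p := by
  rw [inv_pow, q_pow_pred hp, inv_inv]

lemma q_sq_pow_ne_one {p : ℕ} (hodd : Odd p) {b : ℕ} (hb : 0 < b) (hbp : b < p) :
    (q p ^ 2) ^ b ≠ 1 := by
  have hp : p ≠ 0 := by omega
  rw [← pow_mul, Ne, (q_isPrimitiveRoot hp).pow_eq_one_iff_dvd]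
  intro h
  have h2 : p ∣ b := (Nat.Coprime.dvd_mul_left hodd.coprime_two_right).mp h
  exact absurd (Nat.le_of_dvd hb h2) (by omega)

lemma geom_sum_ne_zero_of_pow_ne_one {r : ℂ} {b : ℕ} (h : r ^ b ≠ 1) :
    ∑ j ∈ Finset.range b, r ^ j ≠ 0 := by
  intro h0
  have := geom_sum_mul r b
  rw [h0, zero_mul] at this
  exact h (sub_eq_zero.mp this.symm)

lemma geom_sum_q_sq {p : ℕ} (h : q p ^ 2 ≠ 1) (b : ℕ) :
    ∑ j ∈ Finset.range (b + 1), (q p ^ 2) ^ j = q p ^ b * qnum p (b + 1) := by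
  have hq := q_ne_zero p
  have h1 : q p ^ 2 - 1 ≠ 0 := sub_ne_zero.mpr h
  have h2 : q p - (q p)⁻¹ ≠ 0 := by
    intro h0
    apply h1
    field_simp at h0
    simpa using h0
  rw [geom_sum_eq h, qnum, mul_div_assoc', div_eq_div_iff h1 h2, inv_pow]
  field_simp
  ring

lemma geom_sum_q_inv_sq {p : ℕ} (h : q p ^ 2 ≠ 1) (b : ℕ) :
    ∑ j ∈ Finset.range (b + 1), ((q p)⁻¹ ^ 2) ^ j = (q p)⁻¹ ^ b * qnum p (b + 1) := by
  have hq := q_ne_zero p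
  have h0 : (q p)⁻¹ ^ 2 ≠ 1 := by
    rw [inv_pow]
    exact fun h' => h (inv_eq_one.mp h')
  have h1 : (q p)⁻¹ ^ 2 - 1 ≠ 0 := sub_ne_zero.mpr h0
  have h2 : q p - (q p)⁻¹ ≠ 0 := by
    intro h3
    apply h0
    field_simp at h3 ⊢
    linear_combination -h3
  rw [geom_sum_eq h0, qnum, mul_div_assoc', div_eq_div_iff h1 h2]
  simp only [inv_pow]
  field_simp
  ring

lemma prod_mul_pow_mul_geom_sum (r s c : ℂ) (f : ℕ → ℂ) (hrs : s * r = 1)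
    (hf : ∀ j, ∑ i ∈ Finset.range (j + 1), (r ^ 2) ^ i = r ^ j * f (j + 1)) (n : ℕ) :
    ∏ j ∈ Finset.range n, (c * s ^ j * ∑ i ∈ Finset.range (n - j), (r ^ 2) ^ i) =
      c ^ n * ∏ j ∈ Finset.range n, f (j + 1) := by
  have h1 : ∏ j ∈ Finset.range n, (∑ i ∈ Finset.range (n - j), (r ^ 2) ^ i) =
      ∏ j ∈ Finset.range n, (∑ i ∈ Finset.range (j + 1), (r ^ 2) ^ i) := by
    rw [← Finset.prod_range_reflect]
    refine Finset.prod_congr rfl fun j hj => ?_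
    have := Finset.mem_range.mp hj
    congr 2
    omega
  rw [Finset.prod_mul_distrib, h1, ← Finset.prod_mul_distrib]
  rw [← Finset.card_range n, ← Finset.prod_const, Finset.card_range, ← Finset.prod_mul_distrib]
  refine Finset.prod_congr rfl fun j _ => ?_
  rw [hf]
  have : s ^ j * r ^ j = 1 := by rw [← mul_pow, hrs, one_pow]
  linear_combination c * f (j + 1) * this

/-! ### `q`-commuting elements -/

section QCommute

variable {R : Type*} [Ring R] [Algebra ℂ R]

lemma pow_mul_of_mul_eq_smul {x y : R} {r : ℂ} (h : x * y = r • (y * x)) (n : ℕ) :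
    x ^ n * y = r ^ n • (y * x ^ n) := by
  induction n with
  | zero => simp
  | succ n ih =>
    rw [pow_succ, mul_assoc, h, mul_smul_comm, ← mul_assoc, ih, smul_mul_assoc, smul_smul,
      mul_assoc, pow_succ' r]

lemma mul_pow_of_mul_eq_smul {x y : R} {r : ℂ} (h : x * y = r • (y * x)) (n : ℕ) :
    x * y ^ n = r ^ n • (y ^ n * x) := by
  induction n with
  | zero => simp
  | succ n ih =>
    rw [pow_succ, ← mul_assoc, ih, smul_mul_assoc, mul_assoc, h, mul_smul_comm, smul_smul,
      mul_assoc, pow_succ r]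

end QCommute

/-! ### Presentations of `A` and `U_f` -/

lemma ηm_mul_ηp (p : ℕ) : ηm p * ηp p = (q p ^ 2) • (ηp p * ηm p) := by
  simpa [ηm, ηp] using RingQuot.mkAlgHom_rel ℂ (ERel.commEta (p := p))

lemma ηp_mul_dl (p : ℕ) : ηp p * dl p = (q p ^ 2) • (dl p * ηp p) := by
  simpa [dl, ηp] using RingQuot.mkAlgHom_rel ℂ (ERel.commEpD (p := p))

lemma ηm_mul_dl (p : ℕ) : ηm p * dl p = (q p ^ 2) • (dl p * ηm p) := by
  simpa [dl, ηm] using RingQuot.mkAlgHom_rel ℂ (ERel.commEmD (p := p))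

lemma dl_pow_self (p : ℕ) : dl p ^ p = 1 := by
  simpa [dl] using RingQuot.mkAlgHom_rel ℂ (ERel.deltaPow (p := p))

lemma ηp_pow_self (p : ℕ) : ηp p ^ p = 0 := by
  simpa [ηp] using RingQuot.mkAlgHom_rel ℂ (ERel.epPow (p := p))

lemma ηm_pow_self (p : ℕ) : ηm p ^ p = 0 := by
  simpa [ηm] using RingQuot.mkAlgHom_rel ℂ (ERel.emPow (p := p))

lemma up_mul_um (p : ℕ) : up p * um p = um p * up p := by
  simpa [up, um] using RingQuot.mkAlgHom_rel ℂ (UfRel.commP (p := p))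

lemma up_mul_uk (p : ℕ) : up p * uk p = (q p)⁻¹ • (uk p * up p) := by
  simpa [up, uk] using RingQuot.mkAlgHom_rel ℂ (UfRel.ppK (p := p))

lemma um_mul_uk (p : ℕ) : um p * uk p = q p • (uk p * um p) := by
  simpa [um, uk] using RingQuot.mkAlgHom_rel ℂ (UfRel.pmK (p := p))

lemma ukinv_mul_uk (p : ℕ) : ukinv p * uk p = 1 := by
  simpa [ukinv, uk] using RingQuot.mkAlgHom_rel ℂ (UfRel.kinvK (p := p))

lemma uk_pow_self (p : ℕ) : uk p ^ p = 1 := by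
  simpa [uk] using RingQuot.mkAlgHom_rel ℂ (UfRel.kPow (p := p))

lemma up_pow_self (p : ℕ) : up p ^ p = 0 := by
  simpa [up] using RingQuot.mkAlgHom_rel ℂ (UfRel.ppPow (p := p))

lemma um_pow_self (p : ℕ) : um p ^ p = 0 := by
  simpa [um] using RingQuot.mkAlgHom_rel ℂ (UfRel.pmPow (p := p))

lemma dl_pow_mod (p a : ℕ) : dl p ^ a = dl p ^ (a % p) := by
  conv_lhs => rw [← Nat.mod_add_div a p, pow_add, pow_mul, dl_pow_self, one_pow, mul_one]

lemma uk_pow_mod (p a : ℕ) : uk p ^ a = uk p ^ (a % p) := by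
  conv_lhs => rw [← Nat.mod_add_div a p, pow_add, pow_mul, uk_pow_self, one_pow, mul_one]

lemma ukinv_eq_uk_pow {p : ℕ} (hp : p ≠ 0) : ukinv p = uk p ^ (p - 1) := by
  have h : uk p * uk p ^ (p - 1) = 1 := by
    rw [mul_pow_sub_one hp, uk_pow_self]
  exact left_inv_eq_right_inv (ukinv_mul_uk p) h

theorem A_induction {p : ℕ} {P : A p → Prop} (hone : P 1) (hp : P (ηp p)) (hm : P (ηm p))
    (hd : P (dl p)) (hsmul : ∀ (r : ℂ) x, P x → P (r • x)) (hadd : ∀ x y, P x → P y → P (x + y))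
    (hmul : ∀ x y, P x → P y → P (x * y)) (x : A p) : P x := by
  obtain ⟨x, rfl⟩ := RingQuot.mkAlgHom_surjective ℂ (ERel p) x
  induction x using FreeAlgebra.induction with
  | grade0 r => simpa [Algebra.algebraMap_eq_smul_one] using hsmul r 1 hone
  | grade1 g => cases g <;> assumption
  | mul x y hx hy => simpa using hmul _ _ hx hy
  | add x y hx hy => simpa using hadd _ _ hx hy

theorem Uf_induction {p : ℕ} {P : Uf p → Prop} (hone : P 1) (hp : P (up p)) (hm : P (um p))
    (hk : P (uk p)) (hkinv : P (ukinv p)) (hsmul : ∀ (r : ℂ) x, P x → P (r • x))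
    (hadd : ∀ x y, P x → P y → P (x + y)) (hmul : ∀ x y, P x → P y → P (x * y)) (x : Uf p) :
    P x := by
  obtain ⟨x, rfl⟩ := RingQuot.mkAlgHom_surjective ℂ (UfRel p) x
  induction x using FreeAlgebra.induction with
  | grade0 r => simpa [Algebra.algebraMap_eq_smul_one] using hsmul r 1 hone
  | grade1 g => cases g <;> assumption
  | mul x y hx hy => simpa using hmul _ _ hx hy
  | add x y hx hy => simpa using hadd _ _ hx hy

theorem exists_A_lift {p : ℕ} {R : Type*} [Ring R] [Algebra ℂ R] (x y d : R)
    (h₁ : y * x = (q p ^ 2) • (x * y)) (h₂ : x * d = (q p ^ 2) • (d * x))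
    (h₃ : y * d = (q p ^ 2) • (d * y)) (h₄ : d ^ p = 1) (h₅ : x ^ p = 0) (h₆ : y ^ p = 0) :
    ∃ f : A p →ₐ[ℂ] R, f (ηp p) = x ∧ f (ηm p) = y ∧ f (dl p) = d := by
  let g : Gen → R := fun t => Gen.casesOn t x y d
  refine ⟨RingQuot.liftAlgHom ℂ ⟨FreeAlgebra.lift ℂ g, ?_⟩, ?_⟩
  · rintro _ _ (_ | _ | _ | _ | _ | _) <;> simpa [g]
  · simp [ηp, ηm, dl, RingQuot.liftAlgHom_mkAlgHom_apply, g]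

theorem exists_Uf_lift {p : ℕ} {R : Type*} [Ring R] [Algebra ℂ R] (x y k l : R)
    (h₁ : x * y = y * x) (h₂ : x * k = (q p)⁻¹ • (k * x)) (h₃ : y * k = q p • (k * y))
    (h₄ : k * l = 1) (h₅ : l * k = 1) (h₆ : k ^ p = 1) (h₇ : x ^ p = 0) (h₈ : y ^ p = 0) :
    ∃ f : Uf p →ₐ[ℂ] R, f (up p) = x ∧ f (um p) = y ∧ f (uk p) = k ∧ f (ukinv p) = l := by
  let g : UGen → R := fun t => UGen.casesOn t x y k l
  refine ⟨RingQuot.liftAlgHom ℂ ⟨FreeAlgebra.lift ℂ g, ?_⟩, ?_⟩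
  · rintro _ _ (_ | _ | _ | _ | _ | _ | _ | _) <;> simpa [g]
  · simp [up, um, uk, ukinv, RingQuot.liftAlgHom_mkAlgHom_apply, g]

/-! ### Monomial spanning sets -/

/-- The monomial `δ^a η₊^b η₋^c` of `A`. -/
def monoA (p a b c : ℕ) : A p := dl p ^ a * (ηp p ^ b * ηm p ^ c)

/-- The monomial `κ^a p₊^b p₋^c` of `U_f`. -/
def monoU (p a b c : ℕ) : Uf p := uk p ^ a * (up p ^ b * um p ^ c)

lemma dl_mul_monoA (p a b c : ℕ) : dl p * monoA p a b c = monoA p (a + 1) b c := by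
  rw [monoA, monoA, ← mul_assoc, pow_succ']

lemma ηp_mul_monoA (p a b c : ℕ) :
    ηp p * monoA p a b c = (q p ^ 2) ^ a • monoA p a (b + 1) c := by
  rw [monoA, monoA, ← mul_assoc, mul_pow_of_mul_eq_smul (ηp_mul_dl p), smul_mul_assoc, mul_assoc,
    ← mul_assoc (ηp p), ← pow_succ']

lemma ηm_mul_monoA (p a b c : ℕ) :
    ηm p * monoA p a b c = ((q p ^ 2) ^ a * (q p ^ 2) ^ b) • monoA p a b (c + 1) := by
  rw [monoA, monoA, ← mul_assoc, mul_pow_of_mul_eq_smul (ηm_mul_dl p), smul_mul_assoc, mul_assoc,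
    ← mul_assoc (ηm p), mul_pow_of_mul_eq_smul (ηm_mul_ηp p), smul_mul_assoc, mul_smul_comm,
    smul_smul, mul_assoc, ← pow_succ']

lemma uk_mul_monoU (p a b c : ℕ) : uk p * monoU p a b c = monoU p (a + 1) b c := by
  rw [monoU, monoU, ← mul_assoc, pow_succ']

lemma up_mul_monoU (p a b c : ℕ) :
    up p * monoU p a b c = (q p)⁻¹ ^ a • monoU p a (b + 1) c := by
  rw [monoU, monoU, ← mul_assoc, mul_pow_of_mul_eq_smul (up_mul_uk p), smul_mul_assoc, mul_assoc,
    ← mul_assoc (up p), ← pow_succ']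

lemma um_mul_monoU (p a b c : ℕ) :
    um p * monoU p a b c = q p ^ a • monoU p a b (c + 1) := by
  have h : Commute (um p) (up p) := (up_mul_um p).symm
  rw [monoU, monoU, ← mul_assoc, mul_pow_of_mul_eq_smul (um_mul_uk p), smul_mul_assoc, mul_assoc,
    ← mul_assoc (um p), (h.pow_right b).eq, mul_assoc, ← pow_succ']

lemma span_monoA_eq_top {p : ℕ} (hp : p ≠ 0) :
    Submodule.span ℂ (Set.range fun i : Fin p × Fin p × Fin p => monoA p i.1 i.2.1 i.2.2) = ⊤ := by
  set S := Submodule.span ℂ (Set.range fun i : Fin p × Fin p × Fin p => monoA p i.1 i.2.1 i.2.2)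
  have hmem : ∀ a b c, monoA p a b c ∈ S := by
    intro a b c
    by_cases hb : b < p
    · by_cases hc : c < p
      · have : monoA p a b c = monoA p (a % p) b c := by
          rw [monoA, dl_pow_mod, monoA]
        rw [this]
        exact Submodule.subset_span
          ⟨(⟨a % p, Nat.mod_lt _ (Nat.pos_of_ne_zero hp)⟩, ⟨b, hb⟩, ⟨c, hc⟩), rfl⟩
      · rw [monoA, pow_eq_zero_of_le (not_lt.mp hc) (ηm_pow_self p), mul_zero, mul_zero]
        exact S.zero_mem
    · rw [monoA, pow_eq_zero_of_le (not_lt.mp hb) (ηp_pow_self p), zero_mul, mul_zero]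
      exact S.zero_mem
  have key : ∀ t : A p, (∀ a b c, t * monoA p a b c ∈ S) → ∀ y ∈ S, t * y ∈ S := by
    intro t ht y hy
    induction hy using Submodule.span_induction with
    | mem y hy => obtain ⟨i, rfl⟩ := hy; exact ht _ _ _
    | zero => rw [mul_zero]; exact S.zero_mem
    | add x y _ _ hx hy => rw [mul_add]; exact S.add_mem hx hy
    | smul r x _ hx => rw [mul_smul_comm]; exact S.smul_mem r hx
  have hx : ∀ x : A p, ∀ y ∈ S, x * y ∈ S := by
    refine A_induction ?_ ?_ ?_ ?_ ?_ ?_ ?_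
    · intro y hy; rwa [one_mul]
    · refine key _ fun a b c => ?_
      rw [ηp_mul_monoA]; exact S.smul_mem _ (hmem _ _ _)
    · refine key _ fun a b c => ?_
      rw [ηm_mul_monoA]; exact S.smul_mem _ (hmem _ _ _)
    · refine key _ fun a b c => ?_
      rw [dl_mul_monoA]; exact hmem _ _ _
    · intro r x hx y hy
      rw [smul_mul_assoc]; exact S.smul_mem _ (hx y hy)
    · intro x y hx hy z hz
      rw [add_mul]; exact S.add_mem (hx z hz) (hy z hz)
    · intro x y hx hy z hz
      rw [mul_assoc]; exact hx _ (hy z hz)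
  refine eq_top_iff.mpr fun x _ => ?_
  have h1 : (1 : A p) ∈ S := by simpa [monoA] using hmem 0 0 0
  simpa using hx x 1 h1

lemma span_monoU_eq_top {p : ℕ} (hp : p ≠ 0) :
    Submodule.span ℂ (Set.range fun i : Fin p × Fin p × Fin p => monoU p i.1 i.2.1 i.2.2) = ⊤ := by
  set S := Submodule.span ℂ (Set.range fun i : Fin p × Fin p × Fin p => monoU p i.1 i.2.1 i.2.2)
  have hmem : ∀ a b c, monoU p a b c ∈ S := by
    intro a b c
    by_cases hb : b < p
    · by_cases hc : c < p
      · have : monoU p a b c = monoU p (a % p) b c := by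
          rw [monoU, uk_pow_mod, monoU]
        rw [this]
        exact Submodule.subset_span
          ⟨(⟨a % p, Nat.mod_lt _ (Nat.pos_of_ne_zero hp)⟩, ⟨b, hb⟩, ⟨c, hc⟩), rfl⟩
      · rw [monoU, pow_eq_zero_of_le (not_lt.mp hc) (um_pow_self p), mul_zero, mul_zero]
        exact S.zero_mem
    · rw [monoU, pow_eq_zero_of_le (not_lt.mp hb) (up_pow_self p), zero_mul, mul_zero]
      exact S.zero_mem
  have key : ∀ t : Uf p, (∀ a b c, t * monoU p a b c ∈ S) → ∀ y ∈ S, t * y ∈ S := by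
    intro t ht y hy
    induction hy using Submodule.span_induction with
    | mem y hy => obtain ⟨i, rfl⟩ := hy; exact ht _ _ _
    | zero => rw [mul_zero]; exact S.zero_mem
    | add x y _ _ hx hy => rw [mul_add]; exact S.add_mem hx hy
    | smul r x _ hx => rw [mul_smul_comm]; exact S.smul_mem r hx
  have hx : ∀ x : Uf p, ∀ y ∈ S, x * y ∈ S := by
    refine Uf_induction ?_ ?_ ?_ ?_ ?_ ?_ ?_ ?_
    · intro y hy; rwa [one_mul]
    · refine key _ fun a b c => ?_
      rw [up_mul_monoU]; exact S.smul_mem _ (hmem _ _ _)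
    · refine key _ fun a b c => ?_
      rw [um_mul_monoU]; exact S.smul_mem _ (hmem _ _ _)
    · refine key _ fun a b c => ?_
      rw [uk_mul_monoU]; exact hmem _ _ _
    · refine key _ fun a b c => ?_
      rw [ukinv_eq_uk_pow hp, monoU, ← mul_assoc, ← pow_add]
      exact hmem _ _ _
    · intro r x hx y hy
      rw [smul_mul_assoc]; exact S.smul_mem _ (hx y hy)
    · intro x y hx hy z hz
      rw [add_mul]; exact S.add_mem (hx z hz) (hy z hz)
    · intro x y hx hy z hz
      rw [mul_assoc]; exact hx _ (hy z hz)
  refine eq_top_iff.mpr fun x _ => ?_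
  have h1 : (1 : Uf p) ∈ S := by simpa [monoU] using hmem 0 0 0
  simpa using hx x 1 h1

/-! ### Skew derivations of `A` -/

/-- `D` is a `(K, L)`-skew derivation of `A`. -/
def IsSkewDerivation {p : ℕ} (K L : A p →ₐ[ℂ] A p) (D : Module.End ℂ (A p)) : Prop :=
  ∀ x y, D (x * y) = D x * K y + L x * D y

/-- `K` is the automorphism of `A` fixing `η±` and scaling `δ` by `s`. -/
def IsScaling {p : ℕ} (s : ℂ) (K : A p →ₐ[ℂ] A p) : Prop :=
  K (ηp p) = ηp p ∧ K (ηm p) = ηm p ∧ K (dl p) = s • dl p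

theorem exists_isScaling {p : ℕ} (s : ℂ) (hs : s ^ p = 1) :
    ∃ K : A p →ₐ[ℂ] A p, IsScaling s K := by
  refine exists_A_lift (ηp p) (ηm p) (s • dl p) (ηm_mul_ηp p) ?_ ?_ ?_ (ηp_pow_self p)
    (ηm_pow_self p)
  · rw [mul_smul_comm, ηp_mul_dl, smul_mul_assoc, smul_comm]
  · rw [mul_smul_comm, ηm_mul_dl, smul_mul_assoc, smul_comm]
  · rw [smul_pow, hs, dl_pow_self, one_smul]

lemma IsScaling.apply_monoA {p : ℕ} {s : ℂ} {K : A p →ₐ[ℂ] A p} (hK : IsScaling s K)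
    (a b c : ℕ) : K (monoA p a b c) = s ^ a • monoA p a b c := by
  obtain ⟨h1, h2, h3⟩ := hK
  simp only [monoA, map_mul, map_pow, h1, h2, h3, smul_pow, smul_mul_assoc]

lemma IsScaling.pow_apply_monoA {p : ℕ} {s : ℂ} {K : A p →ₐ[ℂ] A p} (hK : IsScaling s K)
    (n a b c : ℕ) : (K.toLinearMap ^ n) (monoA p a b c) = (s ^ a) ^ n • monoA p a b c := by
  induction n with
  | zero => simp
  | succ n ih =>
    rw [pow_succ', Module.End.mul_apply, ih, map_smul, AlgHom.toLinearMap_apply, hK.apply_monoA,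
      smul_smul, pow_succ]

theorem exists_isSkewDerivation {p : ℕ} (hp3 : 3 ≤ p)
    {ΔA : A p →ₐ[ℂ] (A p ⊗[ℂ] A p)}
    (hΔA₁ : ΔA (ηp p) = ηp p ⊗ₜ[ℂ] 1 + dl p ⊗ₜ[ℂ] ηp p)
    (hΔA₂ : ΔA (ηm p) = ηm p ⊗ₜ[ℂ] 1 + (dl p ^ (p - 1)) ⊗ₜ[ℂ] ηm p)
    (hΔA₃ : ΔA (dl p) = dl p ⊗ₜ[ℂ] dl p)
    {K L : A p →ₐ[ℂ] A p} (hK : IsScaling (q p) K) (hL : IsScaling (q p)⁻¹ L) (c c' : ℂ) :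
    ∃ D : Module.End ℂ (A p), IsSkewDerivation K L D ∧ D (ηp p) = c • dl p ∧
      D (ηm p) = c' • dl p ^ (p - 1) ∧ D (dl p) = 0 := by
  have hp : p ≠ 0 := by omega
  have hq := q_ne_zero p
  have hnil : ∀ t : ℂ, (!![0, t; 0, 0] : Matrix (Fin 2) (Fin 2) ℂ) ^ p = 0 := by
    intro t
    refine pow_eq_zero_of_le (show 2 ≤ p by omega) ?_
    rw [pow_two]
    ext i j
    fin_cases i <;> fin_cases j <;> simp
  have hdiag : (!![(q p)⁻¹, 0; 0, q p] : Matrix (Fin 2) (Fin 2) ℂ) ^ p = 1 := by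
    have : (!![(q p)⁻¹, 0; 0, q p] : Matrix (Fin 2) (Fin 2) ℂ) =
        Matrix.diagonal ![(q p)⁻¹, q p] := by
      ext i j; fin_cases i <;> fin_cases j <;> rfl
    rw [this, Matrix.diagonal_pow, ← Matrix.diagonal_one]
    congr 1
    ext i
    fin_cases i <;> simp [q_pow_self hp]
  have hsc : ∀ t : ℂ, (!![0, t; 0, 0] : Matrix (Fin 2) (Fin 2) ℂ) * !![(q p)⁻¹, 0; 0, q p] =
      (q p ^ 2) • (!![(q p)⁻¹, 0; 0, q p] * !![0, t; 0, 0]) := by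
    intro t
    ext i j
    fin_cases i <;> fin_cases j <;> simp
    field_simp
  obtain ⟨φ, hφ₁, hφ₂, hφ₃⟩ := exists_A_lift (p := p) (R := Matrix (Fin 2) (Fin 2) ℂ)
    !![0, c; 0, 0] !![0, c'; 0, 0] !![(q p)⁻¹, 0; 0, q p] (by simp) (hsc c) (hsc c') hdiag
    (hnil c) (hnil c')
  let Φ : A p →ₐ[ℂ] Matrix (Fin 2) (Fin 2) (A p) :=
    ((matrixEquivTensor (Fin 2) ℂ (A p)).symm.toAlgHom.comp
      (Algebra.TensorProduct.map (AlgHom.id ℂ (A p)) φ)).comp ΔA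
  have hΦ₁ : Φ (ηp p) = !![ηp p, c • dl p; 0, ηp p] := by
    simp only [Φ, AlgHom.comp_apply, hΔA₁, map_add, Algebra.TensorProduct.map_tmul, hφ₁, map_one]
    ext i j
    fin_cases i <;> fin_cases j <;>
      simp [matrixEquivTensor_apply_symm, Algebra.algebraMap_eq_smul_one]
  have hΦ₂ : Φ (ηm p) = !![ηm p, c' • dl p ^ (p - 1); 0, ηm p] := by
    simp only [Φ, AlgHom.comp_apply, hΔA₂, map_add, Algebra.TensorProduct.map_tmul, hφ₂, map_one]
    ext i j
    fin_cases i <;> fin_cases j <;>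
      simp [matrixEquivTensor_apply_symm, Algebra.algebraMap_eq_smul_one]
  have hΦ₃ : Φ (dl p) = !![(q p)⁻¹ • dl p, 0; 0, q p • dl p] := by
    simp only [Φ, AlgHom.comp_apply, hΔA₃, Algebra.TensorProduct.map_tmul, hφ₃]
    ext i j
    fin_cases i <;> fin_cases j <;>
      simp [matrixEquivTensor_apply_symm, Algebra.algebraMap_eq_smul_one]
  have htri : ∀ x, Φ x 0 0 = L x ∧ Φ x 1 1 = K x ∧ Φ x 1 0 = 0 := by
    refine A_induction ?_ ?_ ?_ ?_ ?_ ?_ ?_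
    · simp
    · simp [hΦ₁, hK.1, hL.1]
    · simp [hΦ₂, hK.2.1, hL.2.1]
    · simp [hΦ₃, hK.2.2, hL.2.2]
    · rintro r x ⟨h1, h2, h3⟩
      simp [h1, h2, h3]
    · rintro x y ⟨h1, h2, h3⟩ ⟨h1', h2', h3'⟩
      simp [h1, h2, h3, h1', h2', h3']
    · rintro x y ⟨h1, h2, h3⟩ ⟨h1', h2', h3'⟩
      simp [Matrix.mul_apply, h1, h2, h3, h1', h2', h3']
  refine ⟨(Matrix.entryLinearMap ℂ (A p) 0 1).comp Φ.toLinearMap, ?_, ?_, ?_, ?_⟩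
  · intro x y
    simp [Matrix.mul_apply, (htri x).1, (htri y).2.1, add_comm]
  · simp [hΦ₁]
  · simp [hΦ₂]
  · simp [hΦ₃]

lemma IsSkewDerivation.map_one {p : ℕ} {K L : A p →ₐ[ℂ] A p} {D : Module.End ℂ (A p)}
    (hD : IsSkewDerivation K L D) : D 1 = 0 := by
  simpa using hD 1 1

lemma IsSkewDerivation.map_pow_of_map_eq_zero {p : ℕ} {K L : A p →ₐ[ℂ] A p}
    {D : Module.End ℂ (A p)} (hD : IsSkewDerivation K L D) {x : A p} (hx : D x = 0) (n : ℕ) :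
    D (x ^ n) = 0 := by
  induction n with
  | zero => simpa using hD.map_one
  | succ n ih => rw [pow_succ, hD, ih, hx, zero_mul, mul_zero, add_zero]

lemma IsSkewDerivation.map_pow {p : ℕ} {K L : A p →ₐ[ℂ] A p}
    {D : Module.End ℂ (A p)} (hD : IsSkewDerivation K L D) {x y : A p} {r : ℂ}
    (hKx : K x = x) (hLx : L x = x) (hx : D x = y) (hxy : x * y = r • (y * x)) (n : ℕ) :
    D (x ^ n) = (∑ j ∈ Finset.range n, r ^ j) • (y * x ^ (n - 1)) := by
  induction n with
  | zero => simpa using hD.map_one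
  | succ n ih =>
    rw [pow_succ', hD, hx, _root_.map_pow, hKx, hLx, ih]
    rcases n with _ | n
    · simp
    · rw [mul_smul_comm, ← mul_assoc, hxy, smul_mul_assoc, smul_smul, mul_assoc,
        Finset.sum_range_succ' (fun j => r ^ j) (n + 1), Nat.add_sub_cancel, Nat.add_sub_cancel,
        ← pow_succ', add_smul, pow_zero, one_smul, Finset.sum_mul, add_comm]
      simp only [pow_succ]

lemma IsSkewDerivation.apply_monoA_plus {p : ℕ} {s t c : ℂ} {K L : A p →ₐ[ℂ] A p}
    {D : Module.End ℂ (A p)} (hD : IsSkewDerivation K L D) (hK : IsScaling t K)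
    (hL : IsScaling s L) (h₁ : D (ηp p) = c • dl p) (h₂ : D (ηm p) = 0) (h₃ : D (dl p) = 0)
    (a b e : ℕ) :
    D (monoA p a b e) = (c * s ^ a * ∑ j ∈ Finset.range b, (q p ^ 2) ^ j) •
      monoA p (a + 1) (b - 1) e := by
  have hxy : ηp p * (c • dl p) = (q p ^ 2) • ((c • dl p) * ηp p) := by
    rw [mul_smul_comm, ηp_mul_dl, smul_mul_assoc, smul_comm]
  rw [monoA, hD, hD.map_pow_of_map_eq_zero h₃, zero_mul, zero_add, hD,
    hD.map_pow_of_map_eq_zero h₂, mul_zero, add_zero, hD.map_pow hK.1 hL.1 h₁ hxy,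
    _root_.map_pow, _root_.map_pow, hL.2.2, hK.2.1, monoA, pow_succ (dl p)]
  simp only [smul_pow, smul_mul_assoc, mul_smul_comm, smul_smul, mul_assoc]
  congr 1
  ring

lemma ηm_mul_dl_inv {p : ℕ} (hp : p ≠ 0) :
    ηm p * dl p ^ (p - 1) = ((q p)⁻¹ ^ 2) • (dl p ^ (p - 1) * ηm p) := by
  rw [mul_pow_of_mul_eq_smul (ηm_mul_dl p)]
  congr 1
  rw [← pow_mul, mul_comm, pow_mul, q_pow_pred hp]

lemma ηp_mul_dl_inv {p : ℕ} (hp : p ≠ 0) :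
    ηp p * dl p ^ (p - 1) = ((q p)⁻¹ ^ 2) • (dl p ^ (p - 1) * ηp p) := by
  rw [mul_pow_of_mul_eq_smul (ηp_mul_dl p)]
  congr 1
  rw [← pow_mul, mul_comm, pow_mul, q_pow_pred hp]

lemma IsSkewDerivation.apply_monoA_minus {p : ℕ} (hp : p ≠ 0) {s t c : ℂ} {K L : A p →ₐ[ℂ] A p}
    {D : Module.End ℂ (A p)} (hD : IsSkewDerivation K L D) (hK : IsScaling t K)
    (hL : IsScaling s L) (h₁ : D (ηp p) = 0) (h₂ : D (ηm p) = c • dl p ^ (p - 1))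
    (h₃ : D (dl p) = 0) (a b e : ℕ) :
    D (monoA p a b e) =
      (c * s ^ a * ((q p)⁻¹ ^ 2) ^ b * ∑ j ∈ Finset.range e, ((q p)⁻¹ ^ 2) ^ j) •
      monoA p (a + (p - 1)) b (e - 1) := by
  have hxy : ηm p * (c • dl p ^ (p - 1)) = ((q p)⁻¹ ^ 2) • ((c • dl p ^ (p - 1)) * ηm p) := by
    rw [mul_smul_comm, ηm_mul_dl_inv hp, smul_mul_assoc, smul_comm]
  have hcomm := pow_mul_of_mul_eq_smul (ηp_mul_dl_inv hp) b
  rw [monoA, hD, hD.map_pow_of_map_eq_zero h₃, zero_mul, zero_add, hD,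
    hD.map_pow_of_map_eq_zero h₁, zero_mul, zero_add, hD.map_pow hK.2.1 hL.2.1 h₂ hxy,
    _root_.map_pow, _root_.map_pow, hL.2.2, hL.1, monoA, pow_add]
  simp only [smul_pow, smul_mul_assoc, mul_smul_comm, smul_smul]
  rw [← mul_assoc (ηp p ^ b), hcomm]
  simp only [smul_mul_assoc, mul_smul_comm, smul_smul, mul_assoc]
  congr 1
  ring

lemma pow_apply_monoA_of_plus {p : ℕ} {D : Module.End ℂ (A p)} {σ : ℕ → ℕ → ℂ}
    (h : ∀ a b e, D (monoA p a b e) = σ a b • monoA p (a + 1) (b - 1) e) (n a b e : ℕ) :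
    (D ^ n) (monoA p a b e) =
      (∏ j ∈ Finset.range n, σ (a + j) (b - j)) • monoA p (a + n) (b - n) e := by
  induction n with
  | zero => simp
  | succ n ih =>
    rw [pow_succ', Module.End.mul_apply, ih, map_smul, h, smul_smul, Finset.prod_range_succ,
      Nat.sub_sub, add_assoc]

lemma pow_apply_monoA_of_minus {p k : ℕ} {D : Module.End ℂ (A p)} {σ : ℕ → ℕ → ℕ → ℂ}
    (h : ∀ a b e, D (monoA p a b e) = σ a b e • monoA p (a + k) b (e - 1)) (n a b e : ℕ) :
    (D ^ n) (monoA p a b e) =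
      (∏ j ∈ Finset.range n, σ (a + j * k) b (e - j)) • monoA p (a + n * k) b (e - n) := by
  induction n with
  | zero => simp
  | succ n ih =>
    rw [pow_succ', Module.End.mul_apply, ih, map_smul, h, smul_smul, Finset.prod_range_succ,
      Nat.sub_sub, add_assoc, add_one_mul]

/-! ### The action of `U_f` on `A` by left translations -/

/-- An action of `U_f` on `A` under which `κ^{±1}` act by scalings of `δ` and `p±` act by skew
derivations lowering the degree in `η±`. -/
structure IsTranslationAction (p : ℕ) (ρ : Uf p →ₐ[ℂ] Module.End ℂ (A p))
    (K L : A p →ₐ[ℂ] A p) : Prop where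
  map_uk : ρ (uk p) = K.toLinearMap
  map_ukinv : ρ (ukinv p) = L.toLinearMap
  scaling_uk : IsScaling (q p) K
  scaling_ukinv : IsScaling (q p)⁻¹ L
  skew_up : IsSkewDerivation K L (ρ (up p))
  skew_um : IsSkewDerivation K L (ρ (um p))
  up_ηp : ρ (up p) (ηp p) = (Complex.I * qh p) • dl p
  up_ηm : ρ (up p) (ηm p) = 0
  up_dl : ρ (up p) (dl p) = 0
  um_ηp : ρ (um p) (ηp p) = 0
  um_ηm : ρ (um p) (ηm p) = (Complex.I * (qh p)⁻¹) • dl p ^ (p - 1)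
  um_dl : ρ (um p) (dl p) = 0

lemma end_A_ext {p : ℕ} (hp : p ≠ 0) {f g : Module.End ℂ (A p)}
    (h : ∀ a b e, b < p → e < p → f (monoA p a b e) = g (monoA p a b e)) : f = g :=
  LinearMap.ext_on_range (span_monoA_eq_top hp) fun i => h _ _ _ i.2.1.2 i.2.2.2

theorem exists_isTranslationAction {p : ℕ} (hp3 : 3 ≤ p)
    {ΔA : A p →ₐ[ℂ] (A p ⊗[ℂ] A p)}
    (hΔA₁ : ΔA (ηp p) = ηp p ⊗ₜ[ℂ] 1 + dl p ⊗ₜ[ℂ] ηp p)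
    (hΔA₂ : ΔA (ηm p) = ηm p ⊗ₜ[ℂ] 1 + (dl p ^ (p - 1)) ⊗ₜ[ℂ] ηm p)
    (hΔA₃ : ΔA (dl p) = dl p ⊗ₜ[ℂ] dl p) :
    ∃ ρ K L, IsTranslationAction p ρ K L := by
  have hp : p ≠ 0 := by omega
  have hq := q_ne_zero p
  obtain ⟨K, hK⟩ := exists_isScaling (q p) (q_pow_self hp)
  obtain ⟨L, hL⟩ := exists_isScaling (p := p) (q p)⁻¹ (q_inv_pow_self hp)
  obtain ⟨D, hD, hD₁, hD₂, hD₃⟩ :=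
    exists_isSkewDerivation hp3 hΔA₁ hΔA₂ hΔA₃ hK hL (Complex.I * qh p) 0
  obtain ⟨E, hE, hE₁, hE₂, hE₃⟩ :=
    exists_isSkewDerivation hp3 hΔA₁ hΔA₂ hΔA₃ hK hL 0 (Complex.I * (qh p)⁻¹)
  rw [zero_smul] at hD₂ hE₁
  have hDm := hD.apply_monoA_plus hK hL hD₁ hD₂ hD₃
  have hEm := hE.apply_monoA_minus hp hK hL hE₁ hE₂ hE₃
  obtain ⟨ρ, h₁, h₂, h₃, h₄⟩ := exists_Uf_lift (p := p) D E K.toLinearMap L.toLinearMap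
    (by
      refine end_A_ext hp fun a b e _ _ => ?_
      rw [Module.End.mul_apply, Module.End.mul_apply, hDm, hEm, map_smul, map_smul, hDm, hEm,
        smul_smul, smul_smul]
      rcases b with _ | b
      · simp
      · rw [add_right_comm]
        congr 1
        rw [pow_add _ a, pow_add _ a, q_inv_pow_pred hp, Nat.add_sub_cancel]
        generalize ∑ j ∈ Finset.range (b + 1), (q p ^ 2) ^ j = S
        generalize ∑ j ∈ Finset.range e, ((q p)⁻¹ ^ 2) ^ j = T
        linear_combination (Complex.I * qh p * (Complex.I * (qh p)⁻¹) * ((q p)⁻¹ ^ a) ^ 2 *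
          ((q p)⁻¹ ^ 2) ^ b * S * T * (q p)⁻¹) * inv_mul_cancel₀ hq)
    (by
      refine end_A_ext hp fun a b e _ _ => ?_
      rw [LinearMap.smul_apply, Module.End.mul_apply, Module.End.mul_apply,
        AlgHom.toLinearMap_apply, AlgHom.toLinearMap_apply, hDm, map_smul, hK.apply_monoA,
        hK.apply_monoA, map_smul, hDm]
      simp only [smul_smul]
      congr 1
      field_simp
      ring)
    (by
      refine end_A_ext hp fun a b e _ _ => ?_
      rw [LinearMap.smul_apply, Module.End.mul_apply, Module.End.mul_apply,
        AlgHom.toLinearMap_apply, AlgHom.toLinearMap_apply, hEm, map_smul, hK.apply_monoA,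
        hK.apply_monoA, map_smul, hEm]
      simp only [smul_smul]
      congr 1
      rw [pow_add, q_pow_pred hp]
      field_simp)
    (by
      refine end_A_ext hp fun a b e _ _ => ?_
      rw [Module.End.mul_apply, AlgHom.toLinearMap_apply, AlgHom.toLinearMap_apply,
        hL.apply_monoA, map_smul, hK.apply_monoA, smul_smul, ← mul_pow, inv_mul_cancel₀ hq,
        one_pow, one_smul, Module.End.one_apply])
    (by
      refine end_A_ext hp fun a b e _ _ => ?_
      rw [Module.End.mul_apply, AlgHom.toLinearMap_apply, AlgHom.toLinearMap_apply,
        hK.apply_monoA, map_smul, hL.apply_monoA, smul_smul, ← mul_pow, mul_inv_cancel₀ hq,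
        one_pow, one_smul, Module.End.one_apply])
    (by
      refine end_A_ext hp fun a b e _ _ => ?_
      rw [hK.pow_apply_monoA, ← pow_mul, mul_comm, pow_mul, q_pow_self hp, one_pow, one_smul,
        Module.End.one_apply])
    (by
      refine end_A_ext hp fun a b e hb _ => ?_
      rw [pow_apply_monoA_of_plus hDm, Finset.prod_eq_zero (Finset.mem_range.mpr hb) (by simp),
        zero_smul, LinearMap.zero_apply])
    (by
      refine end_A_ext hp fun a b e _ he => ?_
      rw [pow_apply_monoA_of_minus hEm, Finset.prod_eq_zero (Finset.mem_range.mpr he) (by simp),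
        zero_smul, LinearMap.zero_apply])
  exact ⟨ρ, K, L, h₃, h₄, hK, hL, h₁ ▸ hD, h₂ ▸ hE, h₁ ▸ hD₁, h₁ ▸ hD₂, h₁ ▸ hD₃, h₂ ▸ hE₁,
    h₂ ▸ hE₂, h₂ ▸ hE₃⟩

/-! ### The Hopf pairing -/

lemma IsScaling.comul_apply {p : ℕ} {ΔA : A p →ₐ[ℂ] (A p ⊗[ℂ] A p)}
    (hΔA₁ : ΔA (ηp p) = ηp p ⊗ₜ[ℂ] 1 + dl p ⊗ₜ[ℂ] ηp p)
    (hΔA₂ : ΔA (ηm p) = ηm p ⊗ₜ[ℂ] 1 + (dl p ^ (p - 1)) ⊗ₜ[ℂ] ηm p)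
    (hΔA₃ : ΔA (dl p) = dl p ⊗ₜ[ℂ] dl p) {s : ℂ} {K : A p →ₐ[ℂ] A p} (hK : IsScaling s K)
    (x : A p) : ΔA (K x) = K.toLinearMap.lTensor (A p) (ΔA x) := by
  have h : ∀ x, ΔA (K x) = Algebra.TensorProduct.map (AlgHom.id ℂ (A p)) K (ΔA x) := by
    refine A_induction ?_ ?_ ?_ ?_ ?_ ?_ ?_
    · simp
    · simp [hΔA₁, hK.1]
    · simp [hΔA₂, hK.2.1]
    · simp [hΔA₃, hK.2.2]
    · intro r x hx; simp [hx]
    · intro x y hx hy; simp [hx, hy]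
    · intro x y hx hy; simp [hx, hy]
  exact h x

lemma IsSkewDerivation.lTensor_mul {p : ℕ} {K L : A p →ₐ[ℂ] A p} {D : Module.End ℂ (A p)}
    (hD : IsSkewDerivation K L D) (X Y : A p ⊗[ℂ] A p) :
    D.lTensor (A p) (X * Y) = D.lTensor (A p) X * K.toLinearMap.lTensor (A p) Y +
      L.toLinearMap.lTensor (A p) X * D.lTensor (A p) Y := by
  induction X using TensorProduct.induction_on with
  | zero => simp
  | add X₁ X₂ h₁ h₂ => simp only [add_mul, map_add, h₁, h₂]; abel
  | tmul a b =>
    induction Y using TensorProduct.induction_on with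
    | zero => simp
    | add Y₁ Y₂ h₁ h₂ => simp only [mul_add, map_add, h₁, h₂]; abel
    | tmul a' b' => simp [hD b b', TensorProduct.tmul_add]

lemma IsSkewDerivation.comul_apply {p : ℕ} {ΔA : A p →ₐ[ℂ] (A p ⊗[ℂ] A p)}
    (hΔA₁ : ΔA (ηp p) = ηp p ⊗ₜ[ℂ] 1 + dl p ⊗ₜ[ℂ] ηp p)
    (hΔA₂ : ΔA (ηm p) = ηm p ⊗ₜ[ℂ] 1 + (dl p ^ (p - 1)) ⊗ₜ[ℂ] ηm p)
    (hΔA₃ : ΔA (dl p) = dl p ⊗ₜ[ℂ] dl p) {s t : ℂ} {K L : A p →ₐ[ℂ] A p}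
    (hK : IsScaling s K) (hL : IsScaling t L) {D : Module.End ℂ (A p)}
    (hD : IsSkewDerivation K L D) {c c' : ℂ} (h₁ : D (ηp p) = c • dl p)
    (h₂ : D (ηm p) = c' • dl p ^ (p - 1)) (h₃ : D (dl p) = 0) (x : A p) :
    ΔA (D x) = D.lTensor (A p) (ΔA x) := by
  have hD1 := hD.map_one
  revert x
  refine A_induction ?_ ?_ ?_ ?_ ?_ ?_ ?_
  · simp [hD1, Algebra.TensorProduct.one_def]
  · simp [hΔA₁, hΔA₃, h₁, hD1]
  · simp [hΔA₂, hΔA₃, h₂, hD1]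
  · simp [hΔA₃, h₃]
  · intro r x hx; simp [hx]
  · intro x y hx hy; simp [hx, hy]
  · intro x y hx hy
    rw [hD, map_add, map_mul, map_mul, map_mul, hD.lTensor_mul, hx, hy,
      hK.comul_apply hΔA₁ hΔA₂ hΔA₃, hL.comul_apply hΔA₁ hΔA₂ hΔA₃]

theorem IsTranslationAction.comul_apply {p : ℕ} {ΔA : A p →ₐ[ℂ] (A p ⊗[ℂ] A p)}
    (hΔA₁ : ΔA (ηp p) = ηp p ⊗ₜ[ℂ] 1 + dl p ⊗ₜ[ℂ] ηp p)
    (hΔA₂ : ΔA (ηm p) = ηm p ⊗ₜ[ℂ] 1 + (dl p ^ (p - 1)) ⊗ₜ[ℂ] ηm p)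
    (hΔA₃ : ΔA (dl p) = dl p ⊗ₜ[ℂ] dl p) {ρ : Uf p →ₐ[ℂ] Module.End ℂ (A p)}
    {K L : A p →ₐ[ℂ] A p} (h : IsTranslationAction p ρ K L) (u : Uf p) :
    ∀ x, ΔA (ρ u x) = (ρ u).lTensor (A p) (ΔA x) := by
  revert u
  refine Uf_induction ?_ ?_ ?_ ?_ ?_ ?_ ?_ ?_
  · intro x
    rw [map_one, Module.End.one_apply, Module.End.one_eq_id, LinearMap.lTensor_id,
      LinearMap.id_apply]
  · exact h.skew_up.comul_apply hΔA₁ hΔA₂ hΔA₃ h.scaling_uk h.scaling_ukinv h.up_ηp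
      (h.up_ηm.trans (zero_smul ℂ _).symm) h.up_dl
  · exact h.skew_um.comul_apply hΔA₁ hΔA₂ hΔA₃ h.scaling_uk h.scaling_ukinv
      (h.um_ηp.trans (zero_smul ℂ _).symm) h.um_ηm h.um_dl
  · rw [h.map_uk]
    exact h.scaling_uk.comul_apply hΔA₁ hΔA₂ hΔA₃
  · rw [h.map_ukinv]
    exact h.scaling_ukinv.comul_apply hΔA₁ hΔA₂ hΔA₃
  · intro r u hu x
    simp [hu, LinearMap.lTensor_smul]
  · intro u v hu hv x
    simp [hu, hv, LinearMap.lTensor_add]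
  · intro u v hu hv x
    rw [map_mul, Module.End.mul_apply, hu, hv, LinearMap.lTensor_mul, Module.End.mul_apply]

lemma dualDistrib_counit {p : ℕ} {ΔA : A p →ₐ[ℂ] (A p ⊗[ℂ] A p)}
    (hΔA₁ : ΔA (ηp p) = ηp p ⊗ₜ[ℂ] 1 + dl p ⊗ₜ[ℂ] ηp p)
    (hΔA₂ : ΔA (ηm p) = ηm p ⊗ₜ[ℂ] 1 + (dl p ^ (p - 1)) ⊗ₜ[ℂ] ηm p)
    (hΔA₃ : ΔA (dl p) = dl p ⊗ₜ[ℂ] dl p) {εA : A p →ₐ[ℂ] ℂ}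
    (hεA : εA (ηp p) = 0 ∧ εA (ηm p) = 0 ∧ εA (dl p) = 1) (f : Module.Dual ℂ (A p)) (x : A p) :
    TensorProduct.dualDistrib ℂ (A p) (A p) (f ⊗ₜ[ℂ] εA.toLinearMap) (ΔA x) = f x := by
  have h : ∀ x, Algebra.TensorProduct.rid ℂ ℂ (A p)
      (Algebra.TensorProduct.map (AlgHom.id ℂ (A p)) εA (ΔA x)) = x := by
    refine A_induction ?_ ?_ ?_ ?_ ?_ ?_ ?_
    · simp
    · simp [hΔA₁, hεA.1]
    · simp [hΔA₂, hεA.2.1]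
    · simp [hΔA₃, hεA.2.2]
    · intro r x hx; simp [hx]
    · intro x y hx hy; simp [hx, hy]
    · intro x y hx hy; simp [hx, hy]
  have h2 : ∀ X : A p ⊗[ℂ] A p,
      TensorProduct.dualDistrib ℂ (A p) (A p) (f ⊗ₜ[ℂ] εA.toLinearMap) X =
      f (Algebra.TensorProduct.rid ℂ ℂ (A p)
        (Algebra.TensorProduct.map (AlgHom.id ℂ (A p)) εA X)) := by
    intro X
    induction X using TensorProduct.induction_on with
    | zero => simp
    | add X₁ X₂ h₁ h₂ => simp only [map_add, h₁, h₂]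
    | tmul a b => simp [mul_comm]
  rw [h2, h]

/-- The product `A ⊗ A → A` precomposed with the action of `U_f ⊗ U_f` on `x ⊗ y`. -/
def actMul {p : ℕ} (ρ : Uf p →ₐ[ℂ] Module.End ℂ (A p)) (x y : A p) : Uf p ⊗[ℂ] Uf p →ₗ[ℂ] A p :=
  LinearMap.mul' ℂ (A p) ∘ₗ TensorProduct.map (ρ.toLinearMap.flip x) (ρ.toLinearMap.flip y)

lemma actMul_tmul {p : ℕ} (ρ : Uf p →ₐ[ℂ] Module.End ℂ (A p)) (x y : A p) (u v : Uf p) :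
    actMul ρ x y (u ⊗ₜ v) = ρ u x * ρ v y := by
  simp [actMul]

lemma actMul_mul_tmul {p : ℕ} (ρ : Uf p →ₐ[ℂ] Module.End ℂ (A p)) (x y : A p)
    (S : Uf p ⊗[ℂ] Uf p) (u v : Uf p) :
    actMul ρ x y (S * u ⊗ₜ v) = actMul ρ (ρ u x) (ρ v y) S := by
  induction S using TensorProduct.induction_on with
  | zero => simp
  | add X₁ X₂ h₁ h₂ => simp only [add_mul, map_add, h₁, h₂]
  | tmul a b => simp [actMul_tmul]

theorem IsTranslationAction.apply_mul {p : ℕ} {ΔU : Uf p →ₐ[ℂ] (Uf p ⊗[ℂ] Uf p)}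
    (hΔU₁ : ΔU (up p) = up p ⊗ₜ[ℂ] uk p + ukinv p ⊗ₜ[ℂ] up p)
    (hΔU₂ : ΔU (um p) = um p ⊗ₜ[ℂ] uk p + ukinv p ⊗ₜ[ℂ] um p)
    (hΔU₃ : ΔU (uk p) = uk p ⊗ₜ[ℂ] uk p)
    (hΔU₄ : ΔU (ukinv p) = ukinv p ⊗ₜ[ℂ] ukinv p)
    {ρ : Uf p →ₐ[ℂ] Module.End ℂ (A p)} {K L : A p →ₐ[ℂ] A p}
    (h : IsTranslationAction p ρ K L) (u : Uf p) :
    ∀ x y, ρ u (x * y) = actMul ρ x y (ΔU u) := by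
  revert u
  refine Uf_induction ?_ ?_ ?_ ?_ ?_ ?_ ?_ ?_
  · intro x y
    simp [Algebra.TensorProduct.one_def, actMul_tmul]
  · intro x y
    simp [hΔU₁, actMul_tmul, h.map_uk, h.map_ukinv, h.skew_up x y]
  · intro x y
    simp [hΔU₂, actMul_tmul, h.map_uk, h.map_ukinv, h.skew_um x y]
  · intro x y
    simp [hΔU₃, actMul_tmul, h.map_uk]
  · intro x y
    simp [hΔU₄, actMul_tmul, h.map_ukinv]
  · intro r u hu x y
    simp [hu]
  · intro u v hu hv x y
    simp [hu, hv]
  · intro u v hu hv x y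
    rw [map_mul ρ, Module.End.mul_apply, hv, map_mul ΔU]
    generalize ΔU v = T
    induction T using TensorProduct.induction_on with
    | zero => simp
    | add X₁ X₂ h₁ h₂ => simp only [mul_add, map_add, h₁, h₂]
    | tmul a b => rw [actMul_tmul, hu, actMul_mul_tmul]

lemma IsTranslationAction.apply_one {p : ℕ} {εU : Uf p →ₐ[ℂ] ℂ}
    (hεU : εU (up p) = 0 ∧ εU (um p) = 0 ∧ εU (uk p) = 1 ∧ εU (ukinv p) = 1)
    {ρ : Uf p →ₐ[ℂ] Module.End ℂ (A p)} {K L : A p →ₐ[ℂ] A p}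
    (h : IsTranslationAction p ρ K L) (u : Uf p) : ρ u 1 = εU u • (1 : A p) := by
  revert u
  obtain ⟨h1, h2, h3, h4⟩ := hεU
  refine Uf_induction ?_ ?_ ?_ ?_ ?_ ?_ ?_ ?_
  · simp
  · rw [h.skew_up.map_one, h1, zero_smul]
  · rw [h.skew_um.map_one, h2, zero_smul]
  · simp [h.map_uk, h3]
  · simp [h.map_ukinv, h4]
  · intro r u hu
    simp [hu, smul_smul]
  · intro u v hu hv
    simp [hu, hv, add_smul]
  · intro u v hu hv
    simp [hu, hv, smul_smul, mul_comm]

/-- The axioms of a Hopf pairing between `U_f` and `A`, with the prescribed generator values. -/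
def IsPairing (p : ℕ) (ΔA : A p →ₐ[ℂ] (A p ⊗[ℂ] A p)) (εA : A p →ₐ[ℂ] ℂ)
    (ΔU : Uf p →ₐ[ℂ] (Uf p ⊗[ℂ] Uf p)) (εU : Uf p →ₐ[ℂ] ℂ)
    (B : Uf p →ₗ[ℂ] Module.Dual ℂ (A p)) : Prop :=
  (∀ (u v : Uf p) (x : A p),
      B (u * v) x =
        TensorProduct.dualDistrib ℂ (A p) (A p) (B u ⊗ₜ[ℂ] B v) (ΔA x)) ∧
   (∀ (u : Uf p) (x y : A p),
      B u (x * y) =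
        TensorProduct.dualDistrib ℂ (Uf p) (Uf p)
          (B.flip x ⊗ₜ[ℂ] B.flip y) (ΔU u)) ∧
   (∀ x : A p, B 1 x = εA x) ∧
   (∀ u : Uf p, B u 1 = εU u) ∧
   B (uk p) (dl p) = q p ∧ B (ukinv p) (dl p) = (q p)⁻¹ ∧
   B (uk p) (ηp p) = 0 ∧ B (uk p) (ηm p) = 0 ∧
   B (ukinv p) (ηp p) = 0 ∧ B (ukinv p) (ηm p) = 0 ∧
   B (up p) (ηp p) = Complex.I * qh p ∧ B (um p) (ηm p) = Complex.I * (qh p)⁻¹ ∧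
   B (up p) (ηm p) = 0 ∧ B (um p) (ηp p) = 0 ∧
   B (up p) (dl p) = 0 ∧ B (um p) (dl p) = 0

/-- The bilinear form `⟨u, x⟩ = ε(u · x)` attached to an action of `U_f` on `A`. -/
def actionPairing {p : ℕ} (εA : A p →ₐ[ℂ] ℂ) (ρ : Uf p →ₐ[ℂ] Module.End ℂ (A p)) :
    Uf p →ₗ[ℂ] Module.Dual ℂ (A p) :=
  LinearMap.mk₂ ℂ (fun u x => εA (ρ u x)) (by simp) (by simp) (by simp) (by simp)

lemma actionPairing_apply {p : ℕ} (εA : A p →ₐ[ℂ] ℂ) (ρ : Uf p →ₐ[ℂ] Module.End ℂ (A p))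
    (u : Uf p) (x : A p) : actionPairing εA ρ u x = εA (ρ u x) := rfl

theorem IsTranslationAction.isPairing {p : ℕ} {ΔA : A p →ₐ[ℂ] (A p ⊗[ℂ] A p)}
    (hΔA₁ : ΔA (ηp p) = ηp p ⊗ₜ[ℂ] 1 + dl p ⊗ₜ[ℂ] ηp p)
    (hΔA₂ : ΔA (ηm p) = ηm p ⊗ₜ[ℂ] 1 + (dl p ^ (p - 1)) ⊗ₜ[ℂ] ηm p)
    (hΔA₃ : ΔA (dl p) = dl p ⊗ₜ[ℂ] dl p)
    {εA : A p →ₐ[ℂ] ℂ} (hεA : εA (ηp p) = 0 ∧ εA (ηm p) = 0 ∧ εA (dl p) = 1)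
    {ΔU : Uf p →ₐ[ℂ] (Uf p ⊗[ℂ] Uf p)}
    (hΔU₁ : ΔU (up p) = up p ⊗ₜ[ℂ] uk p + ukinv p ⊗ₜ[ℂ] up p)
    (hΔU₂ : ΔU (um p) = um p ⊗ₜ[ℂ] uk p + ukinv p ⊗ₜ[ℂ] um p)
    (hΔU₃ : ΔU (uk p) = uk p ⊗ₜ[ℂ] uk p)
    (hΔU₄ : ΔU (ukinv p) = ukinv p ⊗ₜ[ℂ] ukinv p)
    {εU : Uf p →ₐ[ℂ] ℂ}
    (hεU : εU (up p) = 0 ∧ εU (um p) = 0 ∧ εU (uk p) = 1 ∧ εU (ukinv p) = 1)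
    {ρ : Uf p →ₐ[ℂ] Module.End ℂ (A p)} {K L : A p →ₐ[ℂ] A p}
    (h : IsTranslationAction p ρ K L) : IsPairing p ΔA εA ΔU εU (actionPairing εA ρ) := by
  refine ⟨?_, ?_, ?_, ?_, ?_⟩
  · intro u v x
    have h2 : ∀ X : A p ⊗[ℂ] A p,
        TensorProduct.dualDistrib ℂ (A p) (A p)
          (actionPairing εA ρ u ⊗ₜ[ℂ] actionPairing εA ρ v) X =
        TensorProduct.dualDistrib ℂ (A p) (A p)
          (actionPairing εA ρ u ⊗ₜ[ℂ] εA.toLinearMap) ((ρ v).lTensor (A p) X) := by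
      intro X
      induction X using TensorProduct.induction_on with
      | zero => simp
      | add X₁ X₂ h₁ h₂ => simp only [map_add, h₁, h₂]
      | tmul a b => simp [actionPairing_apply]
    rw [h2, ← h.comul_apply hΔA₁ hΔA₂ hΔA₃, dualDistrib_counit hΔA₁ hΔA₂ hΔA₃ hεA,
      actionPairing_apply, actionPairing_apply, map_mul, Module.End.mul_apply]
  · intro u x y
    rw [actionPairing_apply, h.apply_mul hΔU₁ hΔU₂ hΔU₃ hΔU₄]
    generalize ΔU u = T
    induction T using TensorProduct.induction_on with
    | zero => simp
    | add X₁ X₂ h₁ h₂ => simp only [map_add, h₁, h₂]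
    | tmul a b => simp [actMul_tmul, actionPairing_apply]
  · intro x
    simp [actionPairing_apply]
  · intro u
    rw [actionPairing_apply, h.apply_one hεU]
    simp
  · obtain ⟨e1, e2, e3⟩ := hεA
    simp [actionPairing_apply, h.map_uk, h.map_ukinv, h.scaling_uk.1, h.scaling_uk.2.1,
      h.scaling_uk.2.2, h.scaling_ukinv.1, h.scaling_ukinv.2.1, h.scaling_ukinv.2.2, h.up_ηp,
      h.up_ηm, h.up_dl, h.um_ηp, h.um_ηm, h.um_dl, e1, e2, e3]

theorem IsPairing.unique {p : ℕ} {ΔA : A p →ₐ[ℂ] (A p ⊗[ℂ] A p)} {εA : A p →ₐ[ℂ] ℂ}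
    {ΔU : Uf p →ₐ[ℂ] (Uf p ⊗[ℂ] Uf p)}
    (hΔU₁ : ΔU (up p) = up p ⊗ₜ[ℂ] uk p + ukinv p ⊗ₜ[ℂ] up p)
    (hΔU₂ : ΔU (um p) = um p ⊗ₜ[ℂ] uk p + ukinv p ⊗ₜ[ℂ] um p)
    (hΔU₃ : ΔU (uk p) = uk p ⊗ₜ[ℂ] uk p)
    (hΔU₄ : ΔU (ukinv p) = ukinv p ⊗ₜ[ℂ] ukinv p)
    {εU : Uf p →ₐ[ℂ] ℂ} {B B' : Uf p →ₗ[ℂ] Module.Dual ℂ (A p)}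
    (hB : IsPairing p ΔA εA ΔU εU B) (hB' : IsPairing p ΔA εA ΔU εU B') : B = B' := by
  obtain ⟨m, c, o, e, g1, g2, g3, g4, g5, g6, g7, g8, g9, g10, g11, g12⟩ := hB
  obtain ⟨m', c', o', e', g1', g2', g3', g4', g5', g6', g7', g8', g9', g10', g11', g12'⟩ := hB'
  have key : ∀ x, B (up p) x = B' (up p) x ∧ B (um p) x = B' (um p) x ∧
      B (uk p) x = B' (uk p) x ∧ B (ukinv p) x = B' (ukinv p) x := by
    refine A_induction ?_ ?_ ?_ ?_ ?_ ?_ ?_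
    · simp only [e, e', and_self]
    · simp only [g3, g5, g7, g10, g3', g5', g7', g10', and_self]
    · simp only [g4, g6, g8, g9, g4', g6', g8', g9', and_self]
    · simp only [g1, g2, g11, g12, g1', g2', g11', g12', and_self]
    · rintro r x ⟨h1, h2, h3, h4⟩
      simp only [map_smul, h1, h2, h3, h4, and_self]
    · rintro x y ⟨h1, h2, h3, h4⟩ ⟨h1', h2', h3', h4'⟩
      simp only [map_add, h1, h2, h3, h4, h1', h2', h3', h4', and_self]
    · rintro x y ⟨h1, h2, h3, h4⟩ ⟨h1', h2', h3', h4'⟩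
      simp only [c, c', hΔU₁, hΔU₂, hΔU₃, hΔU₄, map_add, TensorProduct.dualDistrib_apply,
        LinearMap.flip_apply, h1, h2, h3, h4, h1', h2', h3', h4', and_self]
  refine LinearMap.ext fun u => ?_
  revert u
  refine Uf_induction ?_ ?_ ?_ ?_ ?_ ?_ ?_ ?_
  · exact LinearMap.ext fun x => (o x).trans (o' x).symm
  · exact LinearMap.ext fun x => (key x).1
  · exact LinearMap.ext fun x => (key x).2.1
  · exact LinearMap.ext fun x => (key x).2.2.1
  · exact LinearMap.ext fun x => (key x).2.2.2
  · intro r u hu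
    rw [map_smul, map_smul, hu]
  · intro u v hu hv
    rw [map_add, map_add, hu, hv]
  · intro u v hu hv
    exact LinearMap.ext fun x => by rw [m, m', hu, hv]

/-! ### Values of the pairing on monomials -/

/-- The coefficient by which `p₊^n` sends `δ^a η₊^b η₋^e` to `δ^{a+n} η₊^{b-n} η₋^e`. -/
def plusCoeff (p n a b : ℕ) : ℂ :=
  ∏ j ∈ Finset.range n, (Complex.I * qh p * (q p)⁻¹ ^ (a + j) *
    ∑ i ∈ Finset.range (b - j), (q p ^ 2) ^ i)

/-- The coefficient by which `p₋^n` sends `δ^a η₊^b η₋^e` to `δ^{a-n} η₊^b η₋^{e-n}`. -/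
def minusCoeff (p n a b e : ℕ) : ℂ :=
  ∏ j ∈ Finset.range n, (Complex.I * (qh p)⁻¹ * (q p)⁻¹ ^ (a + j * (p - 1)) *
    ((q p)⁻¹ ^ 2) ^ b * ∑ i ∈ Finset.range (e - j), ((q p)⁻¹ ^ 2) ^ i)

lemma plusCoeff_eq_zero {p n a b : ℕ} (h : b < n) : plusCoeff p n a b = 0 :=
  Finset.prod_eq_zero (Finset.mem_range.mpr h) (by simp)

lemma minusCoeff_eq_zero {p n a b e : ℕ} (h : e < n) : minusCoeff p n a b e = 0 :=
  Finset.prod_eq_zero (Finset.mem_range.mpr h) (by simp)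

lemma qh_ne_zero (p : ℕ) : qh p ≠ 0 := Complex.exp_ne_zero _

lemma plusCoeff_self_ne_zero {p : ℕ} (hodd : Odd p) (a : ℕ) {n : ℕ} (hn : n < p) :
    plusCoeff p n a n ≠ 0 := by
  refine Finset.prod_ne_zero_iff.mpr fun j hj => ?_
  have := Finset.mem_range.mp hj
  exact mul_ne_zero (mul_ne_zero (mul_ne_zero Complex.I_ne_zero (qh_ne_zero p))
    (pow_ne_zero _ (inv_ne_zero (q_ne_zero p))))
    (geom_sum_ne_zero_of_pow_ne_one (q_sq_pow_ne_one hodd (by omega) (by omega)))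

lemma minusCoeff_self_ne_zero {p : ℕ} (hodd : Odd p) (a b : ℕ) {n : ℕ} (hn : n < p) :
    minusCoeff p n a b n ≠ 0 := by
  have hq := inv_ne_zero (q_ne_zero p)
  refine Finset.prod_ne_zero_iff.mpr fun j hj => ?_
  have := Finset.mem_range.mp hj
  refine mul_ne_zero (mul_ne_zero (mul_ne_zero (mul_ne_zero Complex.I_ne_zero
    (inv_ne_zero (qh_ne_zero p))) (pow_ne_zero _ hq)) (pow_ne_zero _ (pow_ne_zero _ hq)))
    (geom_sum_ne_zero_of_pow_ne_one ?_)
  rw [inv_pow, inv_pow]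
  exact fun h => q_sq_pow_ne_one hodd (b := n - j) (by omega) (by omega) (inv_eq_one.mp h)

lemma plusCoeff_self {p : ℕ} (hp : Odd p) (hp3 : 3 ≤ p) (n : ℕ) :
    plusCoeff p n 0 n = Complex.I ^ n * qh p ^ n * qfact p n := by
  have h1 : q p ^ 2 ≠ 1 := by
    simpa using q_sq_pow_ne_one hp (b := 1) one_pos (by omega)
  have := prod_mul_pow_mul_geom_sum (q p) (q p)⁻¹ (Complex.I * qh p) (qnum p)
    (inv_mul_cancel₀ (q_ne_zero p)) (geom_sum_q_sq h1) n
  simpa only [plusCoeff, zero_add, qfact, mul_pow] using this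

lemma minusCoeff_self {p : ℕ} (hp : Odd p) (hp3 : 3 ≤ p) (n : ℕ) :
    minusCoeff p n 0 0 n = Complex.I ^ n * (qh p)⁻¹ ^ n * qfact p n := by
  have h1 : q p ^ 2 ≠ 1 := by
    simpa using q_sq_pow_ne_one hp (b := 1) one_pos (by omega)
  have := prod_mul_pow_mul_geom_sum (q p)⁻¹ (q p) (Complex.I * (qh p)⁻¹) (qnum p)
    (mul_inv_cancel₀ (q_ne_zero p)) (geom_sum_q_inv_sq h1) n
  have h2 : ∀ j, (q p)⁻¹ ^ (j * (p - 1)) = q p ^ j := fun j => by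
    rw [mul_comm, pow_mul, q_inv_pow_pred (by omega)]
  simpa only [minusCoeff, zero_add, qfact, mul_pow _ (qh p)⁻¹, h2, pow_zero, mul_one] using this

lemma counit_monoA {p : ℕ} {εA : A p →ₐ[ℂ] ℂ}
    (hεA : εA (ηp p) = 0 ∧ εA (ηm p) = 0 ∧ εA (dl p) = 1) (a b c : ℕ) :
    εA (monoA p a b c) = 0 ^ b * 0 ^ c := by
  simp [monoA, hεA]

namespace IsTranslationAction

variable {p : ℕ} {ρ : Uf p →ₐ[ℂ] Module.End ℂ (A p)} {K L : A p →ₐ[ℂ] A p}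

lemma monoU_apply_monoA (h : IsTranslationAction p ρ K L) (hp : p ≠ 0) (a b c d e f : ℕ) :
    ρ (monoU p a b c) (monoA p d e f) =
      (minusCoeff p c d e f * plusCoeff p b (d + c * (p - 1)) e *
        (q p ^ (d + c * (p - 1) + b)) ^ a) • monoA p (d + c * (p - 1) + b) (e - b) (f - c) := by
  have hD := h.skew_up.apply_monoA_plus h.scaling_uk h.scaling_ukinv h.up_ηp h.up_ηm h.up_dl
  have hE := h.skew_um.apply_monoA_minus hp h.scaling_uk h.scaling_ukinv h.um_ηp h.um_ηm h.um_dl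
  rw [monoU, map_mul, map_mul, map_pow, map_pow, map_pow, h.map_uk, Module.End.mul_apply,
    Module.End.mul_apply, pow_apply_monoA_of_minus hE, map_smul, pow_apply_monoA_of_plus hD,
    map_smul, map_smul, h.scaling_uk.pow_apply_monoA, smul_smul, smul_smul, plusCoeff, minusCoeff,
    mul_assoc]

variable {εA : A p →ₐ[ℂ] ℂ}

lemma pairing_monoU_monoA (h : IsTranslationAction p ρ K L) (hp : p ≠ 0)
    (hεA : εA (ηp p) = 0 ∧ εA (ηm p) = 0 ∧ εA (dl p) = 1) (a b c d e f : ℕ) :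
    actionPairing εA ρ (monoU p a b c) (monoA p d e f) =
      if e = b ∧ f = c then minusCoeff p c d b c * plusCoeff p b (d + c * (p - 1)) b *
        (q p ^ (d + c * (p - 1) + b)) ^ a else 0 := by
  rw [actionPairing_apply, h.monoU_apply_monoA hp, map_smul, counit_monoA hεA, smul_eq_mul]
  split_ifs with hif
  · obtain ⟨rfl, rfl⟩ := hif
    simp
  · rcases lt_trichotomy e b with he | rfl | he
    · simp [plusCoeff_eq_zero he]
    · rcases lt_trichotomy f c with hf | rfl | hf
      · simp [minusCoeff_eq_zero hf]
      · exact absurd ⟨rfl, rfl⟩ hif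
      · simp [zero_pow (Nat.sub_ne_zero_of_lt hf)]
    · simp [zero_pow (Nat.sub_ne_zero_of_lt he)]

lemma pairing_up_pow (h : IsTranslationAction p ρ K L) (hp : Odd p) (hp3 : 3 ≤ p)
    (hεA : εA (ηp p) = 0 ∧ εA (ηm p) = 0 ∧ εA (dl p) = 1) (n m : ℕ) :
    actionPairing εA ρ (up p ^ n) (ηp p ^ m) =
      if n = m then Complex.I ^ n * qh p ^ n * qfact p n else 0 := by
  have := h.pairing_monoU_monoA (by omega) hεA 0 n 0 0 m 0
  simpa [monoU, monoA, minusCoeff, plusCoeff_self hp hp3, eq_comm] using this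

lemma pairing_um_pow (h : IsTranslationAction p ρ K L) (hp : Odd p) (hp3 : 3 ≤ p)
    (hεA : εA (ηp p) = 0 ∧ εA (ηm p) = 0 ∧ εA (dl p) = 1) (n m : ℕ) :
    actionPairing εA ρ (um p ^ n) (ηm p ^ m) =
      if n = m then Complex.I ^ n * (qh p)⁻¹ ^ n * qfact p n else 0 := by
  have := h.pairing_monoU_monoA (by omega) hεA 0 0 n 0 0 m
  rw [minusCoeff_self hp hp3] at this
  simpa [monoU, monoA, plusCoeff, eq_comm] using this

lemma pairing_uk_pow (h : IsTranslationAction p ρ K L) (hp : p ≠ 0)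
    (hεA : εA (ηp p) = 0 ∧ εA (ηm p) = 0 ∧ εA (dl p) = 1) (n m : ℕ) :
    actionPairing εA ρ (uk p ^ n) (dl p ^ m) = q p ^ (n * m) := by
  have := h.pairing_monoU_monoA hp hεA n 0 0 m 0 0
  simpa [monoU, monoA, plusCoeff, minusCoeff, ← pow_mul, mul_comm m n] using this

/-! ### Nondegeneracy -/

lemma det_gram_ne_zero (h : IsTranslationAction p ρ K L) (hodd : Odd p) (hp : p ≠ 0)
    (hεA : εA (ηp p) = 0 ∧ εA (ηm p) = 0 ∧ εA (dl p) = 1) :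
    (Matrix.of fun i j : Fin p × Fin p × Fin p => actionPairing εA ρ
      (monoU p i.1 i.2.1 i.2.2) (monoA p j.1 j.2.1 j.2.2)).det ≠ 0 := by
  intro hdet
  obtain ⟨X, hX, hMX⟩ := Matrix.exists_mulVec_eq_zero_iff.mpr hdet
  refine hX (funext fun ⟨d₀, b, c⟩ => ?_)
  set v : Fin p → ℂ := fun d => minusCoeff p c d b c * plusCoeff p b (d + c * (p - 1)) b *
    X (d, b, c)
  have hinj : Function.Injective fun d : Fin p => q p ^ ((d : ℕ) + c * (p - 1) + b) := by
    intro d d' hdd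
    simp only [add_assoc, pow_add _ (Fin.val _)] at hdd
    exact Fin.ext ((q_isPrimitiveRoot hp).pow_inj d.2 d'.2
      (mul_right_cancel₀ (pow_ne_zero _ (q_ne_zero p)) hdd))
  have hv : v = 0 := by
    refine Matrix.eq_zero_of_forall_pow_sum_mul_pow_eq_zero hinj fun a => ?_
    have := congrFun hMX (a, b, c)
    rw [Matrix.mulVec, dotProduct, Fintype.sum_prod_type] at this
    rw [Pi.zero_apply] at this
    rw [← this]
    refine Finset.sum_congr rfl fun d _ => ?_
    rw [Fintype.sum_eq_single (b, c)]
    · rw [Matrix.of_apply, h.pairing_monoU_monoA hp hεA, if_pos ⟨rfl, rfl⟩]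
      simp only [v]
      ring
    · rintro ⟨e, f⟩ hef
      rw [Matrix.of_apply, h.pairing_monoU_monoA hp hεA, if_neg, zero_mul]
      rintro ⟨h1, h2⟩
      exact hef (Prod.ext (Fin.ext h1) (Fin.ext h2))
  have hv₀ := congrFun hv d₀
  exact (mul_eq_zero.mp hv₀).resolve_left
    (mul_ne_zero (minusCoeff_self_ne_zero hodd _ _ c.2) (plusCoeff_self_ne_zero hodd _ b.2))

theorem separatingLeft (h : IsTranslationAction p ρ K L) (hodd : Odd p) (hp : p ≠ 0)
    (hεA : εA (ηp p) = 0 ∧ εA (ηm p) = 0 ∧ εA (dl p) = 1) (u : Uf p)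
    (hu : ∀ x, actionPairing εA ρ u x = 0) : u = 0 := by
  have hmem : u ∈ Submodule.span ℂ
      (Set.range fun i : Fin p × Fin p × Fin p => monoU p i.1 i.2.1 i.2.2) := by
    rw [span_monoU_eq_top hp]; trivial
  obtain ⟨c, rfl⟩ := (Submodule.mem_span_range_iff_exists_fun ℂ).mp hmem
  have hc : c = 0 := by
    refine Matrix.eq_zero_of_vecMul_eq_zero (h.det_gram_ne_zero hodd hp hεA) (funext fun j => ?_)
    have := hu (monoA p j.1 j.2.1 j.2.2)
    rw [map_sum, LinearMap.sum_apply] at this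
    simpa [Matrix.vecMul, dotProduct] using this
  simp [hc]

theorem separatingRight (h : IsTranslationAction p ρ K L) (hodd : Odd p) (hp : p ≠ 0)
    (hεA : εA (ηp p) = 0 ∧ εA (ηm p) = 0 ∧ εA (dl p) = 1) (x : A p)
    (hx : ∀ u, actionPairing εA ρ u x = 0) : x = 0 := by
  have hmem : x ∈ Submodule.span ℂ
      (Set.range fun i : Fin p × Fin p × Fin p => monoA p i.1 i.2.1 i.2.2) := by
    rw [span_monoA_eq_top hp]; trivial
  obtain ⟨c, rfl⟩ := (Submodule.mem_span_range_iff_exists_fun ℂ).mp hmem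
  have hc : c = 0 := by
    refine Matrix.eq_zero_of_mulVec_eq_zero (h.det_gram_ne_zero hodd hp hεA) (funext fun i => ?_)
    have := hx (monoU p i.1 i.2.1 i.2.2)
    rw [map_sum] at this
    simpa [Matrix.mulVec, dotProduct, mul_comm] using this
  simp [hc]

end IsTranslationAction

/-- Existence, uniqueness, explicit values, and nondegeneracy of the Hopf pairing
between `U_f = U(e(1,1|p))` and `A = A(E(1,1|p))`. -/
theorem statement9 (p : ℕ) (hp : Odd p) (hp3 : 3 ≤ p)
    (ΔA : A p →ₐ[ℂ] (A p ⊗[ℂ] A p))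
    (hΔA₁ : ΔA (ηp p) = ηp p ⊗ₜ[ℂ] 1 + dl p ⊗ₜ[ℂ] ηp p)
    (hΔA₂ : ΔA (ηm p) = ηm p ⊗ₜ[ℂ] 1 + (dl p ^ (p - 1)) ⊗ₜ[ℂ] ηm p)
    (hΔA₃ : ΔA (dl p) = dl p ⊗ₜ[ℂ] dl p)
    (εA : A p →ₐ[ℂ] ℂ)
    (hεA : εA (ηp p) = 0 ∧ εA (ηm p) = 0 ∧ εA (dl p) = 1)
    (ΔU : Uf p →ₐ[ℂ] (Uf p ⊗[ℂ] Uf p))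
    (hΔU₁ : ΔU (up p) = up p ⊗ₜ[ℂ] uk p + ukinv p ⊗ₜ[ℂ] up p)
    (hΔU₂ : ΔU (um p) = um p ⊗ₜ[ℂ] uk p + ukinv p ⊗ₜ[ℂ] um p)
    (hΔU₃ : ΔU (uk p) = uk p ⊗ₜ[ℂ] uk p)
    (hΔU₄ : ΔU (ukinv p) = ukinv p ⊗ₜ[ℂ] ukinv p)
    (εU : Uf p →ₐ[ℂ] ℂ)
    (hεU : εU (up p) = 0 ∧ εU (um p) = 0 ∧ εU (uk p) = 1 ∧ εU (ukinv p) = 1) :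
    -- the Hopf-pairing axioms together with the generator values
    (∃! B : Uf p →ₗ[ℂ] Module.Dual ℂ (A p),
      ((∀ (u v : Uf p) (x : A p),
          B (u * v) x =
            TensorProduct.dualDistrib ℂ (A p) (A p) (B u ⊗ₜ[ℂ] B v) (ΔA x)) ∧
       (∀ (u : Uf p) (x y : A p),
          B u (x * y) =
            TensorProduct.dualDistrib ℂ (Uf p) (Uf p)
              (B.flip x ⊗ₜ[ℂ] B.flip y) (ΔU u)) ∧
       (∀ x : A p, B 1 x = εA x) ∧
       (∀ u : Uf p, B u 1 = εU u) ∧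
       B (uk p) (dl p) = q p ∧ B (ukinv p) (dl p) = (q p)⁻¹ ∧
       B (uk p) (ηp p) = 0 ∧ B (uk p) (ηm p) = 0 ∧
       B (ukinv p) (ηp p) = 0 ∧ B (ukinv p) (ηm p) = 0 ∧
       B (up p) (ηp p) = Complex.I * qh p ∧ B (um p) (ηm p) = Complex.I * (qh p)⁻¹ ∧
       B (up p) (ηm p) = 0 ∧ B (um p) (ηp p) = 0 ∧
       B (up p) (dl p) = 0 ∧ B (um p) (dl p) = 0)) ∧
    -- every such pairing has the stated values and is nondegenerate
    (∀ B : Uf p →ₗ[ℂ] Module.Dual ℂ (A p),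
      ((∀ (u v : Uf p) (x : A p),
          B (u * v) x =
            TensorProduct.dualDistrib ℂ (A p) (A p) (B u ⊗ₜ[ℂ] B v) (ΔA x)) ∧
       (∀ (u : Uf p) (x y : A p),
          B u (x * y) =
            TensorProduct.dualDistrib ℂ (Uf p) (Uf p)
              (B.flip x ⊗ₜ[ℂ] B.flip y) (ΔU u)) ∧
       (∀ x : A p, B 1 x = εA x) ∧
       (∀ u : Uf p, B u 1 = εU u) ∧
       B (uk p) (dl p) = q p ∧ B (ukinv p) (dl p) = (q p)⁻¹ ∧
       B (uk p) (ηp p) = 0 ∧ B (uk p) (ηm p) = 0 ∧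
       B (ukinv p) (ηp p) = 0 ∧ B (ukinv p) (ηm p) = 0 ∧
       B (up p) (ηp p) = Complex.I * qh p ∧ B (um p) (ηm p) = Complex.I * (qh p)⁻¹ ∧
       B (up p) (ηm p) = 0 ∧ B (um p) (ηp p) = 0 ∧
       B (up p) (dl p) = 0 ∧ B (um p) (dl p) = 0) →
      -- ⟨p₊^n, η₊^m⟩ = i^n q^{n/2} [n]! δ_{nm}
      (∀ n m : ℕ, n < p → m < p →
        B (up p ^ n) (ηp p ^ m) =
          if n = m then Complex.I ^ n * qh p ^ n * qfact p n else 0) ∧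
      -- ⟨p₋^n, η₋^m⟩ = i^n q^{−n/2} [n]! δ_{nm}
      (∀ n m : ℕ, n < p → m < p →
        B (um p ^ n) (ηm p ^ m) =
          if n = m then Complex.I ^ n * (qh p)⁻¹ ^ n * qfact p n else 0) ∧
      -- ⟨κ^n, δ^m⟩ = q^{nm}
      (∀ n m : ℕ, n < p → m < p → B (uk p ^ n) (dl p ^ m) = q p ^ (n * m)) ∧
      -- nondegeneracy
      (∀ u : Uf p, (∀ x : A p, B u x = 0) → u = 0) ∧
      (∀ x : A p, (∀ u : Uf p, B u x = 0) → x = 0)) := by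
  have hp0 : p ≠ 0 := by omega
  obtain ⟨ρ, K, L, hρ⟩ := exists_isTranslationAction hp3 hΔA₁ hΔA₂ hΔA₃
  have hB := hρ.isPairing hΔA₁ hΔA₂ hΔA₃ hεA hΔU₁ hΔU₂ hΔU₃ hΔU₄ hεU
  refine ⟨⟨actionPairing εA ρ, hB, fun B' hB' => IsPairing.unique hΔU₁ hΔU₂ hΔU₃ hΔU₄ hB' hB⟩,
    fun B hB' => ?_⟩
  obtain rfl : B = actionPairing εA ρ := IsPairing.unique hΔU₁ hΔU₂ hΔU₃ hΔU₄ hB' hB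
  exact ⟨fun n m _ _ => hρ.pairing_up_pow hp hp3 hεA n m,
    fun n m _ _ => hρ.pairing_um_pow hp hp3 hεA n m,
    fun n m _ _ => hρ.pairing_uk_pow hp0 hεA n m, hρ.separatingLeft hp hp0 hεA,
    hρ.separatingRight hp hp0 hεA⟩
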